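/- arXiv:2005.12505 — 2 statements merged into one kernel-verified Lean document; each statement's English description precedes it below -/
import Mathlib

section
/- There exists a universal constant c > 0 such that for every δ ∈ (0, 1/8] and every unit vector u ∈ ℝ², the circular segment J = {x ∈ 𝔹 : ⟨x, u⟩ ≥ 1 − δ} of the closed unit disk 𝔹 satisfies vol(E_𝔹(J, closure(𝔹 \ J))) ≥ c·δ⁴. That is, the probability (over two i.i.d. uniform candidates on 𝔹) that a candidate inside J is accepted under consensus voting, given that the convex hull of the group equals the complementary cap closure(𝔹 \ J), is at least a constant times δ⁴. -/
open MeasureTheory Metric Set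
open scoped RealInnerProductSpace

noncomputable section

/-- Points of the plane (with the Euclidean norm). -/
abbrev Pt : Type := EuclideanSpace ℝ (Fin 2)

/-- The Voronoi cell of `w₁` (against competitor `w₂`) inside `K`. -/
def vcell (K : Set Pt) (w₁ w₂ : Pt) : Set Pt := {v ∈ K | dist v w₁ ≤ dist v w₂}

/-- The acceptance event `E_K(H, A)`: the set of candidate pairs `(w₁, w₂) ∈ K × K` such
that some candidate `wᵢ` lies in `H` and `A` is contained in its Voronoi cell, i.e. a
candidate inside `H` is accepted when the convex hull of the group is `A`. -/
def accEvent (K H A : Set Pt) : Set (Pt × Pt) :=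
  {p | p.1 ∈ K ∧ p.2 ∈ K ∧
    ((p.1 ∈ H ∧ A ⊆ vcell K p.1 p.2) ∨ (p.2 ∈ H ∧ A ⊆ vcell K p.2 p.1))}

/-- The closed unit disk in the plane. -/
def unitDisk : Set Pt := Metric.closedBall 0 1

/-!
Write the candidates as `w` and `w + d`. If `⟪v - w, d⟫ ≤ 0`, then `v` is at least as close to `w`
as to `w + d`. Let `w` be a point of the disk of depth `1 - ⟪w, u⟫ ≤ 3δ/4`, and let `v` be any point
of the disk outside the segment, of depth `h ≥ δ`. Both are within `√(2h)` of `u`, so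
`‖v - w‖ ≤ 2√(2h)`, while `⟪v - w, u⟫ ≤ -h/4`. Hence `⟪v - w, d⟫ ≤ 0` as soon as `d` makes an angle
of order `√δ ≤ √h` with `u`. Suitable `w` fill a rectangle of size of order `δ × √δ`, and suitable
`d` with `w + d` still in the disk fill one of size of order `δ × δ√δ`. The shear
`(w, d) ↦ (w, w + d)` preserves volume, so the event has volume of order at least `δ⁴`.
-/

section InnerProductSpace

variable {V : Type*} [NormedAddCommGroup V] [InnerProductSpace ℝ V] {u v w x y d : V}

lemma dist_le_dist_add_right_of_inner_sub_nonpos (h : ⟪v - w, d⟫ ≤ 0) :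
    dist v w ≤ dist v (w + d) := by
  rw [dist_eq_norm, dist_eq_norm, ← sub_sub, ← sq_le_sq₀ (norm_nonneg _) (norm_nonneg _),
    norm_sub_sq_real (v - w) d]
  nlinarith only [h, sq_nonneg ‖d‖]

lemma norm_sub_le_sqrt_two_mul_one_sub_inner (hx : ‖x‖ ≤ 1) (hu : ‖u‖ ≤ 1) :
    ‖x - u‖ ≤ √(2 * (1 - ⟪x, u⟫)) := by
  apply Real.le_sqrt_of_sq_le
  rw [norm_sub_sq_real]
  have hx' : ‖x‖ ^ 2 ≤ 1 := pow_le_one₀ (norm_nonneg x) hx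
  have hu' : ‖u‖ ^ 2 ≤ 1 := pow_le_one₀ (norm_nonneg u) hu
  linarith

lemma inner_sub_nonpos_of_norm_sub_smul_le {D : ℝ} (hu : ‖u‖ ≤ 1) (hv : ‖v‖ ≤ 1) (hw : ‖w‖ ≤ 1)
    (hvw : 1 - ⟪w, u⟫ ≤ 3 / 4 * (1 - ⟪v, u⟫)) (hD : 0 ≤ D)
    (hd : 12 * ‖d - D • u‖ ≤ √(1 - ⟪v, u⟫) * D) : ⟪v - w, d⟫ ≤ 0 := by
  set h := 1 - ⟪v, u⟫
  have h_nonneg : 0 ≤ h :=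
    sub_nonneg.2 ((real_inner_le_norm v u).trans (mul_le_one₀ hv (norm_nonneg u) hu))
  have axial : ⟪v - w, u⟫ ≤ -(h / 4) := by
    rw [inner_sub_left]
    linarith
  have diameter : ‖v - w‖ ≤ 3 * √h := calc
    ‖v - w‖ ≤ ‖v - u‖ + ‖w - u‖ := by simpa only [dist_eq_norm] using dist_triangle_right v w u
    _ ≤ √(2 * h) + √(2 * h) := add_le_add
      (norm_sub_le_sqrt_two_mul_one_sub_inner hv hu)
      ((norm_sub_le_sqrt_two_mul_one_sub_inner hw hu).trans (Real.sqrt_le_sqrt (by linarith)))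
    _ = 2 * √2 * √h := by rw [Real.sqrt_mul zero_le_two]; ring
    _ ≤ 3 * √h := by
      gcongr
      nlinarith only [Real.sq_sqrt zero_le_two, Real.sqrt_nonneg 2]
  calc ⟪v - w, d⟫ = ⟪v - w, u⟫ * D + ⟪v - w, d - D • u⟫ := by
        rw [inner_sub_right, real_inner_smul_right]; ring
    _ ≤ -(h / 4) * D + ‖v - w‖ * ‖d - D • u‖ := by
        gcongr
        exact real_inner_le_norm _ _
    _ ≤ -(h / 4) * D + 3 * √h * (√h * D / 12) := by
        gcongr
        linarith
    _ = 0 := by linear_combination D / 4 * Real.mul_self_sqrt h_nonneg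

lemma norm_sq_eq_inner_sq_add_norm_sub_sq (hu : ‖u‖ = 1) (x : V) :
    ‖x‖ ^ 2 = ⟪x, u⟫ ^ 2 + ‖x - ⟪x, u⟫ • u‖ ^ 2 := by
  rw [norm_sub_sq_real, norm_smul, real_inner_smul_right, hu, mul_one, Real.norm_eq_abs, sq_abs]
  ring

/-- The solid right cylinder of radius `r` about the line `ℝ u`, between the heights `p` and `q`
along the unit vector `u`. In the plane it is a rectangle; a candidate and the displacement to its
competitor range over two of these. -/
def axialCylinder (u : V) (p q r : ℝ) : Set V :=
  {x | ⟪x, u⟫ ∈ Icc p q ∧ ‖x - ⟪x, u⟫ • u‖ ≤ r}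

lemma add_mem_axialCylinder {p q r p' q' r' : ℝ} (hx : x ∈ axialCylinder u p q r)
    (hy : y ∈ axialCylinder u p' q' r') : x + y ∈ axialCylinder u (p + p') (q + q') (r + r') := by
  obtain ⟨⟨hp, hq⟩, hr⟩ := hx
  obtain ⟨⟨hp', hq'⟩, hr'⟩ := hy
  simp only [axialCylinder, mem_ofPred_eq, inner_add_left, add_smul, add_sub_add_comm]
  exact ⟨⟨add_le_add hp hp', add_le_add hq hq'⟩, norm_add_le_of_le hr hr'⟩

lemma axialCylinder_subset_closedBall {p q r : ℝ} (hu : ‖u‖ = 1) (hp : -1 / 2 ≤ p)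
    (hqr : 2 * r ^ 2 ≤ 1 - q) : axialCylinder u p q r ⊆ closedBall 0 1 := by
  rintro x ⟨⟨hpx, hxq⟩, hxr⟩
  rw [mem_closedBall_zero_iff, ← sq_le_one_iff₀ (norm_nonneg x),
    norm_sq_eq_inner_sq_add_norm_sub_sq hu]
  have radial : ‖x - ⟪x, u⟫ • u‖ ^ 2 ≤ r ^ 2 := pow_le_pow_left₀ (norm_nonneg _) hxr 2
  nlinarith only [hp, hpx, hxq, hqr, radial, sq_nonneg r]

end InnerProductSpace

lemma exists_orthonormalBasis_apply_eq {𝕜 V ι : Type*} [RCLike 𝕜] [NormedAddCommGroup V]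
    [InnerProductSpace 𝕜 V] [FiniteDimensional 𝕜 V] [Fintype ι]
    (card_ι : Module.finrank 𝕜 V = Fintype.card ι) {u : V} (hu : ‖u‖ = 1) (i : ι) :
    ∃ b : OrthonormalBasis ι 𝕜 V, b i = u := by
  have orthonormal : Orthonormal 𝕜 (({i} : Set ι).domRestrict fun _ ↦ u) :=
    ⟨fun _ ↦ hu, fun _ _ hjk ↦ absurd (Subsingleton.elim _ _) hjk⟩
  obtain ⟨b, hb⟩ := orthonormal.exists_orthonormalBasis_extension_of_card_eq card_ι
  exact ⟨b, hb i rfl⟩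

section Volume

variable {V : Type*} [NormedAddCommGroup V] [InnerProductSpace ℝ V] [FiniteDimensional ℝ V]
  [MeasurableSpace V] [BorelSpace V]

lemma volume_setOf_forall_repr_mem {ι : Type*} [Fintype ι] (b : OrthonormalBasis ι ℝ V)
    (s : ι → Set ℝ) : volume {x | ∀ i, b.repr x i ∈ s i} = ∏ i, volume (s i) := by
  let e : V ≃ᵐ (ι → ℝ) := b.measurableEquiv.trans (MeasurableEquiv.toLp 2 (ι → ℝ)).symm
  have he : MeasurePreserving e := b.measurePreserving_measurableEquiv.trans
    (EuclideanSpace.volume_preserving_symm_measurableEquiv_toLp ι)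
  calc volume {x | ∀ i, b.repr x i ∈ s i} = volume (e ⁻¹' univ.pi s) := by
        congr 1
        ext x
        exact ⟨fun h i _ ↦ h i, fun h i ↦ h i trivial⟩
    _ = ∏ i, volume (s i) := by rw [he.measure_preimage_equiv, volume_pi_pi]

lemma volume_axialCylinder_of_finrank_eq_two (hV : Module.finrank ℝ V = 2) {u : V} (hu : ‖u‖ = 1)
    (p q r : ℝ) :
    volume (axialCylinder u p q r) = ENNReal.ofReal (q - p) * ENNReal.ofReal (2 * r) := by
  obtain ⟨b, rfl⟩ := exists_orthonormalBasis_apply_eq (ι := Fin 2) (by simpa using hV) hu 0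
  have axial (x : V) : ⟪x, b 0⟫ = b.repr x 0 := by rw [b.repr_apply_apply, real_inner_comm]
  have radial (x : V) : ‖x - b.repr x 0 • b 0‖ = |b.repr x 1| := by
    have expansion : b.repr x 0 • b 0 + b.repr x 1 • b 1 = x := by
      rw [← Fin.sum_univ_two fun i ↦ b.repr x i • b i, b.sum_repr]
    rw [← eq_sub_of_add_eq' expansion, norm_smul, b.norm_eq_one, mul_one, Real.norm_eq_abs]
  calc volume (axialCylinder (b 0) p q r)
      = volume {x | ∀ i, b.repr x i ∈ (![Icc p q, Icc (-r) r] : Fin 2 → Set ℝ) i} := by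
        simp only [axialCylinder, axial, radial, abs_le, Fin.forall_fin_two, Matrix.cons_val_zero,
          Matrix.cons_val_one, mem_Icc]
    _ = ENNReal.ofReal (q - p) * ENNReal.ofReal (2 * r) := by
        simp only [volume_setOf_forall_repr_mem, Fin.prod_univ_two, Matrix.cons_val_zero,
          Matrix.cons_val_one, Real.volume_Icc, sub_neg_eq_add, two_mul]

end Volume

lemma measure_mul_measure_le_prod_of_forall_add_mem {G : Type*} [AddGroup G] [MeasurableSpace G]
    [MeasurableAdd₂ G] (μ ν : Measure G) [SFinite μ] [SFinite ν] [ν.IsAddLeftInvariant]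
    {S T : Set G} {E : Set (G × G)} (h : ∀ w ∈ S, ∀ d ∈ T, (w, w + d) ∈ E) :
    μ S * ν T ≤ μ.prod ν E := by
  have shear := measurePreserving_prod_add μ ν
  calc μ S * ν T = μ.prod ν (S ×ˢ T) := (Measure.prod_prod S T).symm
    _ ≤ μ.prod ν ((fun z : G × G ↦ (z.1, z.1 + z.2)) ⁻¹' E) :=
        measure_mono fun z hz ↦ h z.1 hz.1 z.2 hz.2
    _ ≤ (μ.prod ν).map (fun z : G × G ↦ (z.1, z.1 + z.2)) E :=
        Measure.le_map_apply shear.measurable.aemeasurable E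
    _ = μ.prod ν E := by rw [shear.map_eq]

lemma closure_diff_setOf_le_subset {X α : Type*} [TopologicalSpace X] [TopologicalSpace α]
    [LinearOrder α] [OrderClosedTopology α] {K : Set X} (hK : IsClosed K) {f : X → α}
    (hf : Continuous f) (a : α) : closure (K \ {x ∈ K | a ≤ f x}) ⊆ {x ∈ K | f x ≤ a} :=
  closure_minimal (fun _ hx ↦ ⟨hx.1, (not_le.1 fun ha ↦ hx.2 ⟨hx.1, ha⟩).le⟩)
    (hK.inter (isClosed_le hf continuous_const))

lemma mk_add_mem_accEvent_circularSegment {δ : ℝ} (hδ : 0 ≤ δ) (hδ' : δ ≤ 2) {u w d : Pt}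
    (hu : ‖u‖ = 1) (hw : w ∈ axialCylinder u (1 - 3 * δ / 4) (1 - δ / 2) (√δ / 4))
    (hd : d ∈ axialCylinder u (δ / 8) (δ / 4) (δ * √δ / 96)) {A : Set Pt}
    (hA : A ⊆ {x ∈ unitDisk | ⟪x, u⟫ ≤ 1 - δ}) :
    (w, w + d) ∈ accEvent unitDisk {x ∈ unitDisk | 1 - δ ≤ ⟪x, u⟫} A := by
  have hsq : √δ ^ 2 = δ := Real.sq_sqrt hδ
  have w_mem : w ∈ unitDisk :=
    axialCylinder_subset_closedBall hu (by linarith) (by linarith) hw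
  have radius_le : √δ / 4 + δ * √δ / 96 ≤ √δ / 3 := by
    nlinarith only [mul_le_mul_of_nonneg_right hδ' (Real.sqrt_nonneg δ), Real.sqrt_nonneg δ]
  have add_mem : w + d ∈ unitDisk := by
    refine axialCylinder_subset_closedBall hu (by linarith) ?_ (add_mem_axialCylinder hw hd)
    have := pow_le_pow_left₀ (by positivity) radius_le 2
    linarith
  obtain ⟨⟨hw_lower, -⟩, -⟩ := hw
  obtain ⟨⟨hd_lower, -⟩, hd_radius⟩ := hd
  refine ⟨w_mem, add_mem, .inl ⟨⟨w_mem, by dsimp only; linarith⟩, fun v hv ↦ ?_⟩⟩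
  obtain ⟨v_mem, hv_upper⟩ := hA hv
  refine ⟨v_mem, dist_le_dist_add_right_of_inner_sub_nonpos <|
    inner_sub_nonpos_of_norm_sub_smul_le hu.le (mem_closedBall_zero_iff.1 v_mem)
      (mem_closedBall_zero_iff.1 w_mem) (by linarith) (D := ⟪d, u⟫) (by linarith) ?_⟩
  calc 12 * ‖d - ⟪d, u⟫ • u‖ ≤ √δ * (δ / 8) := by linarith
    _ ≤ √(1 - ⟪v, u⟫) * ⟪d, u⟫ := by
        gcongr
        linarith

theorem accEvent_circularSegment_volume_ge_general :
    ∃ c : ℝ, 0 < c ∧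
      ∀ δ : ℝ, 0 ≤ δ → δ ≤ 2 → ∀ u : Pt, ‖u‖ = 1 →
        ENNReal.ofReal (c * δ ^ 4) ≤
          volume (accEvent unitDisk {x ∈ unitDisk | 1 - δ ≤ ⟪x, u⟫}
            (closure (unitDisk \ {x ∈ unitDisk | 1 - δ ≤ ⟪x, u⟫}))) := by
  refine ⟨1 / 3072, by norm_num, fun δ hδ hδ' u hu ↦ ?_⟩
  have dim : Module.finrank ℝ Pt = 2 := finrank_euclideanSpace_fin
  have hA := closure_diff_setOf_le_subset (isClosed_closedBall : IsClosed unitDisk)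
    (f := fun x ↦ ⟪x, u⟫) (by fun_prop) (1 - δ)
  calc ENNReal.ofReal (1 / 3072 * δ ^ 4)
      = volume (axialCylinder u (1 - 3 * δ / 4) (1 - δ / 2) (√δ / 4)) *
          volume (axialCylinder u (δ / 8) (δ / 4) (δ * √δ / 96)) := by
        rw [volume_axialCylinder_of_finrank_eq_two dim hu,
          volume_axialCylinder_of_finrank_eq_two dim hu, ← ENNReal.ofReal_mul (by linarith),
          ← ENNReal.ofReal_mul (by linarith),
          ← ENNReal.ofReal_mul (mul_nonneg (by linarith) (by positivity))]
        congr 1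
        linear_combination -(δ ^ 3 / 3072) * Real.sq_sqrt hδ
    _ ≤ _ := measure_mul_measure_le_prod_of_forall_add_mem volume volume fun w hw d hd ↦
        mk_add_mem_accEvent_circularSegment hδ hδ' hu hw hd hA

/-- There is a universal constant `c > 0` such that for every
`δ ∈ (0, 1/8]` and every unit vector `u`, the circular segment
`J = {x ∈ 𝔹 : ⟪x, u⟫ ≥ 1 − δ}` of the closed unit disk `𝔹` satisfies
`vol (E_𝔹(J, closure (𝔹 \ J))) ≥ c·δ⁴`: the probability (over two i.i.d. uniform
candidates on `𝔹`) that a candidate inside `J` is accepted, given that the convex hull of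
the group equals the complementary cap, is at least a constant times `δ⁴`. -/
theorem accEvent_circularSegment_volume_ge :
    ∃ c : ℝ, 0 < c ∧
      ∀ δ : ℝ, 0 < δ → δ ≤ 1 / 8 → ∀ u : Pt, ‖u‖ = 1 →
        ENNReal.ofReal (c * δ ^ 4) ≤
          volume (accEvent unitDisk {x ∈ unitDisk | 1 - δ ≤ ⟪x, u⟫}
            (closure (unitDisk \ {x ∈ unitDisk | 1 - δ ≤ ⟪x, u⟫}))) :=
  let ⟨c, hc, h⟩ := accEvent_circularSegment_volume_ge_general
  ⟨c, hc, fun δ hδ hδ' ↦ h δ hδ.le (hδ'.trans (by norm_num))⟩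

end
end

section
/- Consider the consensus-voting group process on the unit square ℍ = [0,1]². Then there exists a constant C > 0 such that for every T ≥ 3, the expected group size after T rounds satisfies E[|G^T|] ≤ C·ln(T)·ln(ln(T)). -/
open MeasureTheory Metric Set
open scoped RealInnerProductSpace ENNReal

noncomputable section

/-- Every group member weakly prefers candidate `w₁` to candidate `w₂`. -/
def Accepts (G : Set Pt) (w₁ w₂ : Pt) : Prop := ∀ v ∈ G, dist v w₁ ≤ dist v w₂

open Classical in
/-- One round of the consensus-voting process: given the current group `G` and a pair of
candidates `c = (w₁, w₂)`, the unanimously preferred candidate (if any) joins the group. -/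
def step (G : Set Pt) (c : Pt × Pt) : Set Pt :=
  if Accepts G c.1 c.2 then insert c.1 G
  else if Accepts G c.2 c.1 then insert c.2 G
  else G

/-- The group after `t` rounds, from initial members `init` and candidate pairs `c`. -/
def grp {k : ℕ} (init : Fin k → Pt) (c : ℕ → Pt × Pt) : ℕ → Set Pt
  | 0 => Set.range init
  | t + 1 => step (grp init c t) (c t)

/-- Extend a `Fin T`-indexed sequence of candidate pairs to an `ℕ`-indexed one. -/
def extSeq {T : ℕ} (c : Fin T → Pt × Pt) : ℕ → Pt × Pt :=
  fun n => if h : n < T then c ⟨n, h⟩ else 0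

/-- The law of the randomness driving the first `T` rounds of the process: `k` i.i.d.
initial members with law `μ`, and `T` i.i.d. candidate pairs, each pair being two i.i.d.
points with law `μ`. -/
def procMeasure (μ : Measure Pt) (k T : ℕ) :
    Measure ((Fin k → Pt) × (Fin T → Pt × Pt)) :=
  (Measure.pi fun _ => μ).prod (Measure.pi fun _ => μ.prod μ)


/-- The unit square `[0,1]²` in the plane. -/
def unitSquare : Set Pt := {x : Pt | ∀ i, x i ∈ Set.Icc (0 : ℝ) 1}

/-!
After one of the eight symmetries of the square, an accepted candidate exceeds its competitor by a
vector of slope in `[0, 1]`. For a slope `ε = 2⁻ʲ`, let `h` be the minimum of `x + ε y` over the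
group, the gap left at the corner. A pair whose difference has slope about `ε` can be accepted only
if it lies in a set of measure at most a constant times `w = h³ min(ε, h)`. Summing the `w` over
symmetries and slopes down to about `1 / T` gives a potential `M`, and the acceptance probability
is `O(M + 1 / T)`.

Conversely, for each of the `j + 1` slopes `2⁻ⁱ ≥ 2⁻ʲ` there are pairs, of total measure at least a
constant times `w`, that are accepted and halve `h`, hence divide `w` by at least `8`. In one round
`M` therefore decreases on average by at least a constant times `∑ (j + 1) w²`, which by
Cauchy–Schwarz is at least a constant times `M² / H`, where `H = 1 + 1/2 + ⋯ + 1/J` and `J` is the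
number of slopes. Hence the expected decrease of `H log (1 + T M)`, up to a constant factor, pays
for the expected growth of the group up to `O(1 / T)` per round. At the start this quantity is
`O(H log T)`, and `H = O(log log T)` because `J = O(log T)`.
-/

namespace ConsensusVoting

/-! ### Shears, drift and logarithms -/

lemma prod_setOf_mem_and_sub_mem {X : Type*} [AddGroup X] [MeasurableSpace X] [MeasurableAdd₂ X]
    [MeasurableNeg X] (μ ν : Measure X) [SFinite μ] [SFinite ν] [μ.IsAddRightInvariant]
    {A D : Set X} (hA : MeasurableSet A) (hD : MeasurableSet D) :
    (μ.prod ν) {p | p.2 ∈ A ∧ p.1 - p.2 ∈ D} = μ D * ν A := by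
  rw [← Measure.prod_prod,
    ← (measurePreserving_sub_prod μ ν).measure_preimage (hD.prod hA).nullMeasurableSet]
  congr 1
  ext p
  exact and_comm

-- The set of states carries no σ-algebra, so Tonelli's theorem is replaced by `lintegral_prod_le`,
-- its half that holds for arbitrary nonnegative functions.
lemma lintegral_foldl_le {S α : Type*} [MeasurableSpace α] (μ : Measure α) [IsProbabilityMeasure μ]
    {f : S → α → S} {P : S → Prop} {F V : S → ℝ≥0∞} {δ : ℝ≥0∞}
    (hP : ∀ s, P s → ∀ᵐ a ∂μ, P (f s a)) (hFV : ∀ s, P s → F s ≤ V s)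
    (hV : ∀ s, P s → ∫⁻ a, V (f s a) ∂μ ≤ V s + δ) (n : ℕ) {s : S} (hs : P s) :
    ∫⁻ c : Fin n → α, F (Fin.foldl n (fun s i => f s (c i)) s) ∂(Measure.pi fun _ => μ) ≤
      V s + n * δ := by
  induction n generalizing s with
  | zero => simpa using hFV s hs
  | succ n ih =>
    have split := measurePreserving_piFinSuccAbove (fun _ : Fin (n + 1) => μ) 0
    calc ∫⁻ c, F (Fin.foldl (n + 1) (fun s i => f s (c i)) s) ∂(Measure.pi fun _ => μ)
      _ = ∫⁻ z : α × (Fin n → α), F (Fin.foldl n (fun s i => f s (z.2 i)) (f s z.1))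
            ∂(μ.prod (Measure.pi fun _ => μ)) := by
          rw [← split.lintegral_comp_emb (MeasurableEquiv.measurableEmbedding _)]
          simp only [Fin.foldl_succ]
          rfl
      _ ≤ ∫⁻ a, ∫⁻ c : Fin n → α, F (Fin.foldl n (fun s i => f s (c i)) (f s a))
            ∂(Measure.pi fun _ => μ) ∂μ := lintegral_prod_le _
      _ ≤ ∫⁻ a, (V (f s a) + n * δ) ∂μ := lintegral_mono_ae ((hP s hs).mono fun a ha => ih ha)
      _ = ∫⁻ a, V (f s a) ∂μ + n * δ := by rw [lintegral_add_right _ measurable_const]; simp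
      _ ≤ V s + δ + n * δ := by gcongr; exact hV s hs
      _ = V s + (n + 1 : ℕ) * δ := by push_cast; ring

lemma log_le_log_sub_div {x y : ℝ} (hx : 0 < x) (hy : 0 < y) :
    Real.log y ≤ Real.log x - (x - y) / x := by
  have h := Real.log_le_sub_one_of_pos (div_pos hy hx)
  rw [Real.log_div hy.ne' hx.ne'] at h
  rw [sub_div, div_self hx.ne']
  linarith

/-! ### Symmetries of the square -/

/-- Names of the eight symmetries of the unit square: reflect the first coordinate, reflect the
second coordinate, exchange the two coordinates (the exchange being performed first). -/
abbrev Symmetry : Type := Bool × Bool × Bool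

/-- The reflection of `[0,1]` in its midpoint if `b` is set, the identity otherwise. -/
def reflectIf (b : Bool) (x : ℝ) : ℝ := bif b then 1 - x else x

lemma sq_reflectIf_sub (b : Bool) (x y : ℝ) :
    (reflectIf b x - reflectIf b y) ^ 2 = (x - y) ^ 2 := by
  cases b <;> simp only [reflectIf, cond_true, cond_false]; ring

lemma reflectIf_mem_Icc_iff (b : Bool) {x : ℝ} :
    reflectIf b x ∈ Icc (0 : ℝ) 1 ↔ x ∈ Icc (0 : ℝ) 1 := by
  cases b <;> simp [reflectIf, and_comm]

lemma measurePreserving_reflectIf (b : Bool) : MeasurePreserving (reflectIf b) := by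
  cases b
  · exact MeasurePreserving.id _
  · exact Measure.measurePreserving_sub_left _ 1

lemma exists_reflectIf_sub_eq_abs (x y : ℝ) : ∃ b, reflectIf b x - reflectIf b y = |x - y| := by
  rcases le_total x y with h | h
  · exact ⟨true, by rw [abs_of_nonpos (sub_nonpos.2 h)]; simp [reflectIf]⟩
  · exact ⟨false, by rw [abs_of_nonneg (sub_nonneg.2 h)]; simp [reflectIf]⟩

/-- The coordinates of a point of the plane after applying a symmetry of the unit square. -/
def chart (σ : Symmetry) (v : Pt) : ℝ × ℝ :=
  Prod.map (reflectIf σ.1) (reflectIf σ.2.1) (bif σ.2.2 then (v 1, v 0) else (v 0, v 1))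

lemma dist_sq_eq_chart (σ : Symmetry) (v w : Pt) :
    dist v w ^ 2 = ((chart σ v).1 - (chart σ w).1) ^ 2 + ((chart σ v).2 - (chart σ w).2) ^ 2 := by
  rw [EuclideanSpace.dist_eq, Real.sq_sqrt (by positivity)]
  obtain ⟨b, b', _ | _⟩ := σ <;>
    simp [chart, sq_reflectIf_sub, Fin.sum_univ_two, Real.dist_eq, sq_abs, add_comm]

lemma chart_mem_Icc_iff (σ : Symmetry) {v : Pt} : chart σ v ∈ Icc 0 1 ↔ v ∈ unitSquare := by
  have h : chart σ v ∈ Icc 0 1 ↔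
      reflectIf σ.1 (chart (false, false, σ.2.2) v).1 ∈ Icc (0 : ℝ) 1 ∧
      reflectIf σ.2.1 (chart (false, false, σ.2.2) v).2 ∈ Icc (0 : ℝ) 1 := by
    rw [← Prod.mk_zero_zero, ← Prod.mk_one_one, ← Icc_prod_Icc]
    rfl
  rw [h, reflectIf_mem_Icc_iff, reflectIf_mem_Icc_iff]
  obtain ⟨b, b', _ | _⟩ := σ <;>
    simp only [chart, reflectIf, unitSquare, Fin.forall_fin_two, cond_true, cond_false, Prod.map,
      mem_ofPred_eq, and_comm]

lemma chart_preimage_Icc (σ : Symmetry) : chart σ ⁻¹' Icc 0 1 = unitSquare := by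
  ext v
  exact chart_mem_Icc_iff σ

lemma measurePreserving_chart (σ : Symmetry) : MeasurePreserving (chart σ) := by
  have coords : MeasurePreserving (fun v : Pt => (v 0, v 1)) :=
    (volume_preserving_finTwoArrow ℝ).comp
      (EuclideanSpace.volume_preserving_symm_measurableEquiv_toLp (Fin 2))
  have reflect := (measurePreserving_reflectIf σ.1).prod (measurePreserving_reflectIf σ.2.1)
  obtain ⟨b, b', _ | _⟩ := σ
  · exact reflect.comp coords
  · exact reflect.comp (Measure.measurePreserving_swap.comp coords)

lemma exists_chart_sub_mem_octant (v w : Pt) :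
    ∃ σ, 0 ≤ (chart σ v).2 - (chart σ w).2 ∧
      (chart σ v).2 - (chart σ w).2 ≤ (chart σ v).1 - (chart σ w).1 := by
  obtain ⟨b₀, h₀⟩ := exists_reflectIf_sub_eq_abs (v 0) (w 0)
  obtain ⟨b₁, h₁⟩ := exists_reflectIf_sub_eq_abs (v 1) (w 1)
  rcases le_total |v 1 - w 1| |v 0 - w 0| with h | h
  · exact ⟨(b₀, b₁, false), by simp [chart, h₀, h₁, h]⟩
  · exact ⟨(b₁, b₀, true), by simp [chart, h₀, h₁, h]⟩

/-- A pair of candidates in the coordinates given by a symmetry of the square. -/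
def pairChart (σ : Symmetry) : Pt × Pt → (ℝ × ℝ) × (ℝ × ℝ) := Prod.map (chart σ) (chart σ)

lemma measurePreserving_pairChart (σ : Symmetry) : MeasurePreserving (pairChart σ) :=
  (measurePreserving_chart σ).prod (measurePreserving_chart σ)

/-- The uniform law on the unit square. -/
abbrev squareLaw : Measure Pt := volume.restrict unitSquare

lemma measurableSet_unitSquare : MeasurableSet unitSquare := by
  rw [← chart_preimage_Icc (false, false, false)]
  exact (measurePreserving_chart _).measurable measurableSet_Icc

instance isProbabilityMeasure_squareLaw : IsProbabilityMeasure squareLaw where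
  measure_univ := by
    rw [Measure.restrict_apply_univ, ← chart_preimage_Icc (false, false, false),
      (measurePreserving_chart _).measure_preimage measurableSet_Icc.nullMeasurableSet]
    simp [← Prod.mk_zero_zero, ← Prod.mk_one_one, ← Icc_prod_Icc, Measure.volume_eq_prod]

/-- The law of a pair of independent uniform candidates. -/
abbrev pairLaw : Measure (Pt × Pt) := squareLaw.prod squareLaw

lemma ae_mem_pairLaw : ∀ᵐ c ∂pairLaw, c.1 ∈ unitSquare ∧ c.2 ∈ unitSquare := by
  rw [pairLaw, Measure.prod_restrict]
  exact ae_restrict_mem (measurableSet_unitSquare.prod measurableSet_unitSquare)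

lemma pairLaw_preimage_pairChart_le (σ : Symmetry) {S : Set ((ℝ × ℝ) × (ℝ × ℝ))}
    (hS : MeasurableSet S) : pairLaw (pairChart σ ⁻¹' S) ≤ volume S := by
  rw [pairLaw, Measure.prod_restrict,
    ← (measurePreserving_pairChart σ).measure_preimage hS.nullMeasurableSet]
  exact Measure.restrict_apply_le _ _

lemma pairLaw_preimage_pairChart (σ : Symmetry) {S : Set ((ℝ × ℝ) × (ℝ × ℝ))}
    (hS : MeasurableSet S) (hsub : S ⊆ Icc 0 1 ×ˢ Icc 0 1) :
    pairLaw (pairChart σ ⁻¹' S) = volume S := by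
  rw [pairLaw, Measure.prod_restrict,
    ← (measurePreserving_pairChart σ).measure_preimage hS.nullMeasurableSet]
  refine Measure.restrict_eq_self _ fun c hc => ?_
  exact ⟨(chart_mem_Icc_iff σ).1 (hsub hc).1, (chart_mem_Icc_iff σ).1 (hsub hc).2⟩

/-! ### Regions of candidate pairs -/

/-- The pairs `(p, q)` with `q` in the rectangle `[0, a]` and difference `p - q` in the rectangle
`[d, d']`. -/
def pairBox (a d d' : ℝ × ℝ) : Set ((ℝ × ℝ) × (ℝ × ℝ)) :=
  {p | p.2 ∈ Icc 0 a ∧ p.1 - p.2 ∈ Icc d d'}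

lemma measurableSet_pairBox (a d d' : ℝ × ℝ) : MeasurableSet (pairBox a d d') :=
  (measurableSet_Icc.preimage measurable_snd).inter
    (measurableSet_Icc.preimage (measurable_fst.sub measurable_snd))

lemma volume_Icc_prod (a b : ℝ × ℝ) :
    volume (Icc a b) = ENNReal.ofReal (b.1 - a.1) * ENNReal.ofReal (b.2 - a.2) := by
  rw [Icc_prod_eq, Measure.volume_eq_prod, Measure.prod_prod, Real.volume_Icc, Real.volume_Icc]

lemma volume_pairBox {a d d' : ℝ × ℝ} (ha : 0 ≤ a) (hd : d ≤ d') :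
    volume (pairBox a d d') =
      ENNReal.ofReal ((d'.1 - d.1) * (d'.2 - d.2) * (a.1 * a.2)) := by
  have ha₁ : 0 ≤ a.1 := ha.1
  have hd₁ := sub_nonneg.2 hd.1
  have hd₂ := sub_nonneg.2 hd.2
  rw [pairBox, Measure.volume_eq_prod,
    prod_setOf_mem_and_sub_mem _ _ measurableSet_Icc measurableSet_Icc, volume_Icc_prod,
    volume_Icc_prod, ENNReal.ofReal_mul (mul_nonneg hd₁ hd₂), ENNReal.ofReal_mul hd₁,
    ENNReal.ofReal_mul ha₁]
  simp

/-- A region containing, in suitable coordinates, every accepted pair whose difference has slope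
between `ε / 2` and `ε`, when the group has corner gap `h` at slope `ε`. -/
def acceptRegion (ε h : ℝ) : Set ((ℝ × ℝ) × (ℝ × ℝ)) :=
  pairBox (2 * h, min 1 (4 * h / ε)) 0 (2 * h, 2 * ε * h)

/-- A region containing the pairs in the unit square whose difference has slope at most `ε`. -/
def flatRegion (ε : ℝ) : Set ((ℝ × ℝ) × (ℝ × ℝ)) := pairBox 1 0 (1, ε)

/-- Pairs with difference of slope about `ε` whose first candidate is accepted and halves the
corner gap of the group at a slope `δ ≤ ε`, as soon as that gap is at least `32 * η`. -/
def winRegion (ε η : ℝ) : Set ((ℝ × ℝ) × (ℝ × ℝ)) :=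
  pairBox (η, min (1 / 2) (η / ε)) (4 * η, 3 * ε * η) (5 * η, 4 * ε * η)

/-- Up to a constant factor, the probability that a pair of uniform points lies in
`acceptRegion ε h`. -/
def weight (ε h : ℝ) : ℝ := h ^ 3 * min ε h

section Weight

variable {ε : ℝ}

lemma weight_nonneg (hε : 0 ≤ ε) {h : ℝ} (hh : 0 ≤ h) : 0 ≤ weight ε h := by
  unfold weight; positivity

lemma weight_le_weight (hε : 0 ≤ ε) {δ a b : ℝ} (hδ : ε ≤ δ) (ha : 0 ≤ a) (hab : a ≤ b) :
    weight ε a ≤ weight δ b := by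
  have hb := ha.trans hab
  unfold weight; gcongr

lemma weight_half_le {h : ℝ} (hh : 0 ≤ h) : weight ε (h / 2) ≤ weight ε h / 8 := by
  have hmin : min ε (h / 2) ≤ min ε h := min_le_min_left _ (half_le_self hh)
  calc (h / 2) ^ 3 * min ε (h / 2) ≤ (h / 2) ^ 3 * min ε h := by gcongr
    _ = weight ε h / 8 := by unfold weight; ring

lemma weight_div_le (hε : 0 ≤ ε) {h : ℝ} (hh : 0 ≤ h) :
    weight ε h / 32 ^ 4 ≤ weight ε (h / 32) := by
  have hmin : min ε h / 32 ≤ min ε (h / 32) := by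
    apply le_min
    · linarith [min_le_left ε h]
    · linarith [min_le_right ε h]
  calc weight ε h / 32 ^ 4 = (h / 32) ^ 3 * (min ε h / 32) := by unfold weight; ring
    _ ≤ weight ε (h / 32) := by unfold weight; gcongr

lemma weight_le (hε : 0 ≤ ε) {h : ℝ} (hh : 0 ≤ h) (h2 : h ≤ 2) : weight ε h ≤ 8 * ε := by
  calc h ^ 3 * min ε h ≤ 2 ^ 3 * ε := by gcongr; exact min_le_left ε h
    _ = 8 * ε := by norm_num

lemma volume_acceptRegion_le (hε : 0 < ε) {h : ℝ} (hh : 0 ≤ h) :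
    volume (acceptRegion ε h) ≤ ENNReal.ofReal (32 * weight ε h) := by
  have hmin : ε * min 1 (4 * h / ε) ≤ 4 * min ε h := by
    rw [mul_min_of_nonneg _ _ hε.le, mul_div_cancel₀ _ hε.ne', mul_min_of_nonneg _ _ (by norm_num)]
    exact min_le_min_right _ (by linarith : ε * 1 ≤ 4 * ε)
  rw [acceptRegion, volume_pairBox ⟨by positivity, by positivity⟩ ⟨by positivity, by positivity⟩]
  apply ENNReal.ofReal_le_ofReal
  calc (2 * h - 0) * (2 * ε * h - 0) * (2 * h * min 1 (4 * h / ε))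
    _ = 8 * h ^ 3 * (ε * min 1 (4 * h / ε)) := by ring
    _ ≤ 8 * h ^ 3 * (4 * min ε h) := by gcongr
    _ = 32 * weight ε h := by unfold weight; ring

lemma volume_flatRegion (hε : 0 ≤ ε) : volume (flatRegion ε) = ENNReal.ofReal ε := by
  rw [flatRegion, volume_pairBox zero_le_one ⟨zero_le_one, hε⟩]
  simp

lemma le_volume_winRegion (hε : 0 < ε) {η : ℝ} (hη : 0 ≤ η) :
    ENNReal.ofReal (weight ε η / 2) ≤ volume (winRegion ε η) := by
  have hmin : min ε η / 2 ≤ ε * min (1 / 2) (η / ε) := by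
    rw [mul_min_of_nonneg _ _ hε.le, mul_div_cancel₀ _ hε.ne']
    apply le_min
    · linarith [min_le_left ε η]
    · linarith [min_le_right ε η]
  have hslope : 3 * ε * η ≤ 4 * ε * η := by gcongr; norm_num
  have hwidth : 4 * η ≤ 5 * η := by linarith
  rw [winRegion, volume_pairBox ⟨hη, by positivity⟩ ⟨hwidth, hslope⟩]
  apply ENNReal.ofReal_le_ofReal
  calc weight ε η / 2 = η ^ 3 * (min ε η / 2) := by unfold weight; ring
    _ ≤ η ^ 3 * (ε * min (1 / 2) (η / ε)) := by gcongr
    _ = (5 * η - 4 * η) * (4 * ε * η - 3 * ε * η) * (η * min (1 / 2) (η / ε)) := by ring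

lemma winRegion_subset_Icc (hε1 : ε ≤ 1) {η : ℝ} (hη : 0 ≤ η) (hη1 : η ≤ 1 / 16) :
    winRegion ε η ⊆ Icc 0 1 ×ˢ Icc 0 1 := by
  rintro ⟨p, q⟩ ⟨⟨⟨hq₁, hq₂⟩, hq₁', hq₂'⟩, ⟨hd₁, hd₂⟩, hd₁', hd₂'⟩
  have hεη : ε * η ≤ 1 * (1 / 16) := by gcongr
  have hq₂'' := le_min_iff.1 hq₂'
  simp only [Prod.fst_zero, Prod.snd_zero, Prod.fst_sub, Prod.snd_sub] at *
  refine ⟨⟨⟨?_, ?_⟩, ?_, ?_⟩, ⟨hq₁, hq₂⟩, ?_, ?_⟩ <;>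
    simp only [Prod.fst_zero, Prod.snd_zero, Prod.fst_one, Prod.snd_one] <;> linarith

lemma disjoint_winRegion {δ η : ℝ} (hδε : δ ≤ ε / 2) (hε : 0 < ε) (hη : 0 < η) :
    Disjoint (winRegion ε η) (winRegion δ η) := by
  rw [Set.disjoint_left]
  rintro ⟨p, q⟩ ⟨-, hε', -⟩ ⟨-, -, hδ'⟩
  have low : 3 * ε * η ≤ p.2 - q.2 := hε'.2
  have high : p.2 - q.2 ≤ 4 * δ * η := hδ'.2
  nlinarith [mul_pos hε hη]

end Weight

/-- The dyadic slope `2⁻ʲ`. -/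
def dyadic (j : ℕ) : ℝ := (1 / 2) ^ j

lemma dyadic_pos (j : ℕ) : 0 < dyadic j := by unfold dyadic; positivity

lemma dyadic_succ (j : ℕ) : dyadic (j + 1) = dyadic j / 2 := by
  unfold dyadic; ring

lemma dyadic_antitone : Antitone dyadic := pow_right_anti₀ (by norm_num) (by norm_num)

lemma dyadic_le_one (j : ℕ) : dyadic j ≤ 1 := pow_le_one₀ (by norm_num) (by norm_num)

lemma exists_dyadic_slope {J : ℕ} {x y : ℝ} (hyx : y ≤ x) (hy : dyadic J * x < y) :
    ∃ j < J, y ≤ dyadic j * x ∧ dyadic j * x / 2 < y := by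
  induction J with
  | zero => simp only [dyadic, pow_zero, one_mul] at hy; linarith
  | succ n ih =>
    rcases lt_or_ge (dyadic n * x) y with h | h
    · obtain ⟨j, hj, h⟩ := ih h
      exact ⟨j, hj.trans n.lt_succ_self, h⟩
    · exact ⟨n, n.lt_succ_self, h, by rw [dyadic_succ] at hy; linarith⟩

lemma le_pairLaw_real_winRegion (σ : Symmetry) {ε : ℝ} (hε : 0 < ε) (hε1 : ε ≤ 1) {η : ℝ}
    (hη : 0 ≤ η) (hη1 : η ≤ 1 / 16) :
    weight ε η / 2 ≤ pairLaw.real (pairChart σ ⁻¹' winRegion ε η) := by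
  rw [Measure.real, ← ENNReal.ofReal_le_iff_le_toReal (measure_ne_top _ _),
    pairLaw_preimage_pairChart σ (S := winRegion ε η) (measurableSet_pairBox _ _ _)
      (winRegion_subset_Icc hε1 hη hη1)]
  exact le_volume_winRegion hε hη

/-- The union of the winning regions over all dyadic slopes at least `2⁻ʲ`. Each of these
`j + 1` disjoint regions has measure at least of the order of `weight (dyadic j) h`. -/
def winSet (j : ℕ) (h : ℝ) : Set ((ℝ × ℝ) × (ℝ × ℝ)) :=
  ⋃ i ∈ Finset.range (j + 1), winRegion (dyadic i) (h / 32)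

lemma measurableSet_winSet (j : ℕ) (h : ℝ) : MeasurableSet (winSet j h) :=
  Finset.measurableSet_biUnion _ fun _ _ => measurableSet_pairBox _ _ _

lemma pairwise_disjoint_winRegion_dyadic {η : ℝ} (hη : 0 < η) :
    Pairwise (Function.onFun Disjoint fun i => winRegion (dyadic i) η) := by
  refine (pairwise_disjoint_on _).2 fun i j hij => disjoint_winRegion ?_ (dyadic_pos i) hη
  rw [← dyadic_succ]
  exact dyadic_antitone hij

lemma le_pairLaw_real_winSet (σ : Symmetry) (j : ℕ) {h : ℝ} (h0 : 0 ≤ h) (h2 : h ≤ 2) :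
    (j + 1) * weight (dyadic j) h / (2 * 32 ^ 4) ≤
      pairLaw.real (pairChart σ ⁻¹' winSet j h) := by
  rcases h0.eq_or_lt with rfl | hpos
  · simp [weight]
  have term (i : ℕ) (hi : i ∈ Finset.range (j + 1)) : weight (dyadic j) h / (2 * 32 ^ 4) ≤
      pairLaw.real (pairChart σ ⁻¹' winRegion (dyadic i) (h / 32)) := by
    have hij : dyadic j ≤ dyadic i := dyadic_antitone (Finset.mem_range_succ_iff.1 hi)
    calc weight (dyadic j) h / (2 * 32 ^ 4) = weight (dyadic j) h / 32 ^ 4 / 2 := by ring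
      _ ≤ weight (dyadic j) (h / 32) / 2 := by gcongr; exact weight_div_le (dyadic_pos j).le h0
      _ ≤ weight (dyadic i) (h / 32) / 2 := by
          gcongr; exact weight_le_weight (dyadic_pos j).le hij (by positivity) le_rfl
      _ ≤ _ := le_pairLaw_real_winRegion σ (dyadic_pos i) (dyadic_le_one i) (by positivity)
          (by linarith)
  calc (j + 1) * weight (dyadic j) h / (2 * 32 ^ 4)
    _ = ∑ i ∈ Finset.range (j + 1), weight (dyadic j) h / (2 * 32 ^ 4) := by
        rw [Finset.sum_const, Finset.card_range, nsmul_eq_mul]; push_cast; ring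
    _ ≤ ∑ i ∈ Finset.range (j + 1), pairLaw.real (pairChart σ ⁻¹' winRegion (dyadic i) (h / 32)) :=
        Finset.sum_le_sum term
    _ = pairLaw.real (pairChart σ ⁻¹' winSet j h) := by
        rw [winSet, preimage_iUnion₂, measureReal_biUnion_finset]
        · exact fun i _ i' _ hne =>
            (pairwise_disjoint_winRegion_dyadic (by positivity) hne).preimage _
        · exact fun i _ => (measurePreserving_pairChart σ).measurable (measurableSet_pairBox _ _ _)

/-! ### Groups and their corner gaps -/

/-- The possible values of the group: finite nonempty subsets of the unit square. -/
structure IsAdmissible (G : Set Pt) : Prop where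
  finite : G.Finite
  nonempty : G.Nonempty
  subset : G ⊆ unitSquare

lemma subset_step (G : Set Pt) (c : Pt × Pt) : G ⊆ step G c := by
  unfold step
  split_ifs <;> simp

lemma step_subset (G : Set Pt) (c : Pt × Pt) : step G c ⊆ insert c.1 (insert c.2 G) := by
  unfold step
  split_ifs <;> grind

lemma IsAdmissible.step {G : Set Pt} (hG : IsAdmissible G) {c : Pt × Pt}
    (hc : c.1 ∈ unitSquare ∧ c.2 ∈ unitSquare) : IsAdmissible (step G c) where
  finite := ((hG.finite.insert _).insert _).subset (step_subset G c)
  nonempty := hG.nonempty.mono (subset_step G c)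
  subset := (step_subset G c).trans (insert_subset hc.1 (insert_subset hc.2 hG.subset))

/-- The linear functional `x + ε * y`. -/
def tilt (ε : ℝ) (z : ℝ × ℝ) : ℝ := z.1 + ε * z.2

/-- The least value of `tilt ε` on the group, in the coordinates given by `σ`: it measures how far
the group stays from the corner of the square that `σ` sends to the origin. -/
def cornerGap (σ : Symmetry) (ε : ℝ) (G : Set Pt) : ℝ := sInf ((fun v => tilt ε (chart σ v)) '' G)

section CornerGap

variable {σ : Symmetry} {ε : ℝ} {G : Set Pt}

lemma cornerGap_le (hG : G.Finite) {v : Pt} (hv : v ∈ G) : cornerGap σ ε G ≤ tilt ε (chart σ v) :=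
  csInf_le (hG.image _).bddBelow (mem_image_of_mem _ hv)

lemma exists_mem_tilt_eq_cornerGap (hG : IsAdmissible G) :
    ∃ v ∈ G, tilt ε (chart σ v) = cornerGap σ ε G :=
  (hG.nonempty.image _).csInf_mem (hG.finite.image _)

lemma cornerGap_anti {G' : Set Pt} (hG : G.Nonempty) (hG' : G'.Finite) (hsub : G ⊆ G') :
    cornerGap σ ε G' ≤ cornerGap σ ε G :=
  csInf_le_csInf (hG'.image _).bddBelow (hG.image _) (image_mono hsub)

lemma cornerGap_nonneg (hε : 0 ≤ ε) (hG : G ⊆ unitSquare) : 0 ≤ cornerGap σ ε G := by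
  refine Real.sInf_nonneg ?_
  rintro _ ⟨v, hv, rfl⟩
  have hv0 := ((chart_mem_Icc_iff σ).2 (hG hv)).1
  exact add_nonneg hv0.1 (mul_nonneg hε hv0.2)

lemma cornerGap_le_two (hε1 : ε ≤ 1) (hG : IsAdmissible G) : cornerGap σ ε G ≤ 2 := by
  obtain ⟨v, hv⟩ := hG.nonempty
  obtain ⟨hv0, hv1⟩ := (chart_mem_Icc_iff σ).2 (hG.subset hv)
  calc cornerGap σ ε G ≤ (chart σ v).1 + ε * (chart σ v).2 := cornerGap_le hG.finite hv
    _ ≤ 1 + 1 * 1 := add_le_add hv1.1 (mul_le_mul hε1 hv1.2 hv0.2 zero_le_one)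
    _ = 2 := by norm_num

end CornerGap

/-! ### Geometry of acceptance -/

lemma dist_le_dist_iff_chart (σ : Symmetry) (v w₁ w₂ : Pt) :
    dist v w₁ ≤ dist v w₂ ↔
      ((chart σ w₁).1 - (chart σ w₂).1) * ((chart σ w₁).1 + (chart σ w₂).1) +
          ((chart σ w₁).2 - (chart σ w₂).2) * ((chart σ w₁).2 + (chart σ w₂).2) ≤
        2 * (((chart σ w₁).1 - (chart σ w₂).1) * (chart σ v).1 +
          ((chart σ w₁).2 - (chart σ w₂).2) * (chart σ v).2) := by
  rw [← sq_le_sq₀ dist_nonneg dist_nonneg, dist_sq_eq_chart σ, dist_sq_eq_chart σ]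
  constructor <;> intro h <;> linarith

lemma mem_flatRegion {ε : ℝ} {p q : ℝ × ℝ} (hp : p ≤ 1) (hq : q ∈ Icc 0 1) (hε : 0 ≤ ε)
    (h0 : 0 ≤ p.2 - q.2) (hle : p.2 - q.2 ≤ p.1 - q.1) (hslope : p.2 - q.2 ≤ ε * (p.1 - q.1)) :
    (p, q) ∈ flatRegion ε := by
  have hd1 : p.1 - q.1 ≤ 1 := (sub_le_self _ hq.1.1).trans hp.1
  refine ⟨hq, ⟨h0.trans hle, h0⟩, hd1, hslope.trans ?_⟩
  exact mul_le_of_le_one_right hε hd1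

-- The preference inequality bounds both coordinates of `p + q`, since all its terms are
-- nonnegative and `p - q` has slope comparable to `ε`.
lemma mem_acceptRegion {ε h : ℝ} {p q z : ℝ × ℝ} (hε : 0 < ε) (hp : 0 ≤ p) (hq : q ∈ Icc 0 1)
    (hz : 0 ≤ z) (hzh : tilt ε z = h) (hslope : p.2 - q.2 ≤ ε * (p.1 - q.1))
    (hslope' : ε * (p.1 - q.1) / 2 < p.2 - q.2)
    (hpref : (p.1 - q.1) * (p.1 + q.1) + (p.2 - q.2) * (p.2 + q.2) ≤
      2 * ((p.1 - q.1) * z.1 + (p.2 - q.2) * z.2)) :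
    (p, q) ∈ acceptRegion ε h := by
  obtain ⟨hq0 : 0 ≤ q.1 ∧ 0 ≤ q.2, hq1 : q.1 ≤ 1 ∧ q.2 ≤ 1⟩ := hq
  have hp1 : 0 ≤ p.1 := hp.1
  have hp2 : 0 ≤ p.2 := hp.2
  have hz2 : 0 ≤ z.2 := hz.2
  have hd1 : 0 < p.1 - q.1 := by
    by_contra! hneg
    nlinarith
  have hd2 : 0 < p.2 - q.2 := (half_pos (mul_pos hε hd1)).trans hslope'
  have hbound : (p.1 - q.1) * (p.1 + q.1) + (p.2 - q.2) * (p.2 + q.2) ≤ (p.1 - q.1) * (2 * h) := by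
    rw [← hzh]
    unfold tilt
    nlinarith [mul_le_mul_of_nonneg_right hslope hz2]
  have hsum1 : p.1 + q.1 ≤ 2 * h := by
    refine le_of_mul_le_mul_left (le_trans ?_ hbound) hd1
    exact le_add_of_nonneg_right (mul_nonneg hd2.le (add_nonneg hp2 hq0.2))
  have hsum2 : (p.2 + q.2) * ε ≤ 4 * h := by
    refine le_of_mul_le_mul_left ?_ hd1
    nlinarith [mul_le_mul_of_nonneg_right hslope'.le (add_nonneg hp2 hq0.2),
      mul_nonneg hd1.le (add_nonneg hp1 hq0.1)]
  refine ⟨⟨hq0, ?_, le_min hq1.2 ?_⟩, ⟨hd1.le, hd2.le⟩, ?_, ?_⟩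
  · change q.1 ≤ 2 * h
    linarith
  · rw [le_div_iff₀ hε]
    change q.2 * ε ≤ 4 * h
    nlinarith
  · change p.1 - q.1 ≤ 2 * h
    linarith [hq0.1]
  · change p.2 - q.2 ≤ 2 * ε * h
    nlinarith [hq0.1]

/-- A region containing, in some coordinates, every pair whose first candidate is accepted by `G`:
one accepting region for each dyadic slope above `2⁻ᴶ`, and the pairs of slope at most `2⁻ᴶ`. -/
def acceptCover (J : ℕ) (σ : Symmetry) (G : Set Pt) : Set ((ℝ × ℝ) × (ℝ × ℝ)) :=
  flatRegion (dyadic J) ∪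
    ⋃ j ∈ Finset.range J, acceptRegion (dyadic j) (cornerGap σ (dyadic j) G)

lemma exists_pairChart_mem_acceptCover {G : Set Pt} (hG : IsAdmissible G) {c : Pt × Pt}
    (hc : c.1 ∈ unitSquare ∧ c.2 ∈ unitSquare) (hacc : Accepts G c.1 c.2) (J : ℕ) :
    ∃ σ, pairChart σ c ∈ acceptCover J σ G := by
  obtain ⟨σ, h0, hle⟩ := exists_chart_sub_mem_octant c.1 c.2
  have hp := (chart_mem_Icc_iff σ).2 hc.1
  have hq := (chart_mem_Icc_iff σ).2 hc.2
  refine ⟨σ, ?_⟩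
  rcases le_or_gt ((chart σ c.1).2 - (chart σ c.2).2)
    (dyadic J * ((chart σ c.1).1 - (chart σ c.2).1)) with hflat | hsteep
  · exact Or.inl (mem_flatRegion hp.2 hq (dyadic_pos J).le h0 hle hflat)
  · obtain ⟨j, hj, hslope, hslope'⟩ := exists_dyadic_slope hle hsteep
    obtain ⟨v, hv, hvh⟩ := exists_mem_tilt_eq_cornerGap (σ := σ) (ε := dyadic j) hG
    exact Or.inr <| mem_biUnion (Finset.mem_coe.2 (Finset.mem_range.2 hj)) <|
      mem_acceptRegion (dyadic_pos j) hp.1 hq ((chart_mem_Icc_iff σ).2 (hG.subset hv)).1 hvh hslope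
        hslope' ((dist_le_dist_iff_chart σ v c.1 c.2).1 (hacc v hv))

section WinRegion

variable {δ ε η : ℝ} {p q : ℝ × ℝ}

lemma bounds_of_mem_winRegion (hε : 0 < ε) (hmem : (p, q) ∈ winRegion ε η) :
    (0 ≤ q.1 ∧ q.1 ≤ η) ∧ (0 ≤ q.2 ∧ ε * q.2 ≤ η) ∧ (4 * η ≤ p.1 - q.1 ∧ p.1 - q.1 ≤ 5 * η) ∧
      (3 * ε * η ≤ p.2 - q.2 ∧ p.2 - q.2 ≤ 4 * ε * η) := by
  obtain ⟨⟨hq0, hq1, hq2⟩, hd, hd'⟩ := hmem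
  have := (le_div_iff₀' hε).1 (hq2.trans (min_le_right _ _))
  exact ⟨⟨hq0.1, hq1⟩, ⟨hq0.2, this⟩, ⟨hd.1, hd'.1⟩, ⟨hd.2, hd'.2⟩⟩

lemma tilt_le_of_mem_winRegion (hδε : δ ≤ ε) (hε : 0 < ε) (hε1 : ε ≤ 1) (hη : 0 ≤ η)
    (hmem : (p, q) ∈ winRegion ε η) : tilt δ p ≤ 16 * η := by
  obtain ⟨hq₁, hq₂, hd₁, hd₂⟩ := bounds_of_mem_winRegion hε hmem
  have hp₂ : 0 ≤ p.2 := by nlinarith [mul_nonneg hε.le hη]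
  calc p.1 + δ * p.2 ≤ p.1 + ε * p.2 := by gcongr
    _ ≤ 6 * η + (η + ε * ε * (4 * η)) := by nlinarith
    _ ≤ 6 * η + (η + 1 * 1 * (4 * η)) := by gcongr
    _ ≤ 16 * η := by linarith

lemma preference_of_mem_winRegion (hδε : δ ≤ ε) (hε : 0 < ε) (hε1 : ε ≤ 1) (hη : 0 ≤ η)
    {z : ℝ × ℝ} (hz : 0 ≤ z) (hηz : 32 * η ≤ tilt δ z) (hmem : (p, q) ∈ winRegion ε η) :
    (p.1 - q.1) * (p.1 + q.1) + (p.2 - q.2) * (p.2 + q.2) ≤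
      2 * ((p.1 - q.1) * z.1 + (p.2 - q.2) * z.2) := by
  obtain ⟨hq₁, hq₂, hd₁, hd₂⟩ := bounds_of_mem_winRegion hε hmem
  have hz1 : 0 ≤ z.1 := hz.1
  have hz2 : 0 ≤ z.2 := hz.2
  have horizontal : (p.1 - q.1) * (p.1 + q.1) ≤ 5 * η * (7 * η) := by
    gcongr <;> linarith
  have vertical : (p.2 - q.2) * (p.2 + q.2) ≤ 4 * η * (2 * η + 4 * η) := by
    calc (p.2 - q.2) * (p.2 + q.2) ≤ 4 * ε * η * (2 * q.2 + 4 * ε * η) :=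
          mul_le_mul hd₂.2 (by linarith) (by linarith) (by positivity)
      _ = 4 * η * (2 * (ε * q.2) + ε * ε * (4 * η)) := by ring
      _ ≤ 4 * η * (2 * η + 1 * 1 * (4 * η)) := by gcongr; exact hq₂.2
      _ = 4 * η * (2 * η + 4 * η) := by ring
  calc (p.1 - q.1) * (p.1 + q.1) + (p.2 - q.2) * (p.2 + q.2)
    _ ≤ 6 * η * (32 * η) := by nlinarith
    _ ≤ 6 * η * (z.1 + ε * z.2) := by
        gcongr
        exact hηz.trans (by unfold tilt; gcongr)
    _ ≤ 2 * (4 * η * z.1 + 3 * ε * η * z.2) := by nlinarith [mul_nonneg hη hz1]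
    _ ≤ 2 * ((p.1 - q.1) * z.1 + (p.2 - q.2) * z.2) := by gcongr <;> linarith

end WinRegion

section WinSet

variable {G : Set Pt} {σ : Symmetry} {j : ℕ} {c : Pt × Pt}

lemma accepts_of_pairChart_mem_winSet (hG : IsAdmissible G)
    (hmem : pairChart σ c ∈ winSet j (cornerGap σ (dyadic j) G)) : Accepts G c.1 c.2 := by
  intro v hv
  obtain ⟨i, hi, hc⟩ := mem_iUnion₂.1 hmem
  have hgap := cornerGap_nonneg (σ := σ) (dyadic_pos j).le hG.subset
  refine (dist_le_dist_iff_chart σ v c.1 c.2).2 <| preference_of_mem_winRegion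
    (dyadic_antitone (Finset.mem_range_succ_iff.1 hi)) (dyadic_pos i) (dyadic_le_one i)
    (by positivity) ((chart_mem_Icc_iff σ).2 (hG.subset hv)).1 ?_ hc
  rw [mul_div_cancel₀ _ (by norm_num)]
  exact cornerGap_le hG.finite hv

lemma cornerGap_step_le_half (hG : IsAdmissible G)
    (hmem : pairChart σ c ∈ winSet j (cornerGap σ (dyadic j) G)) :
    cornerGap σ (dyadic j) (step G c) ≤ cornerGap σ (dyadic j) G / 2 := by
  have hgap := cornerGap_nonneg (σ := σ) (dyadic_pos j).le hG.subset
  rw [step, if_pos (accepts_of_pairChart_mem_winSet hG hmem)]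
  obtain ⟨i, hi, hc⟩ := mem_iUnion₂.1 hmem
  calc cornerGap σ (dyadic j) (insert c.1 G) ≤ tilt (dyadic j) (chart σ c.1) :=
        cornerGap_le (hG.finite.insert _) (mem_insert _ _)
    _ ≤ 16 * (cornerGap σ (dyadic j) G / 32) := tilt_le_of_mem_winRegion
        (dyadic_antitone (Finset.mem_range_succ_iff.1 hi)) (dyadic_pos i) (dyadic_le_one i)
        (by positivity) hc
    _ = cornerGap σ (dyadic j) G / 2 := by ring

end WinSet

/-! ### The potential -/

/-- Up to a constant factor and the pairs of slope at most `2⁻ᴶ`, the probability that a uniform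
pair of candidates leads to an acceptance. -/
def potential (J : ℕ) (G : Set Pt) : ℝ :=
  ∑ σ : Symmetry, ∑ j ∈ Finset.range J, weight (dyadic j) (cornerGap σ (dyadic j) G)

/-- A lower bound for the decrease of the potential in the round with candidates `c`: half of each
term whose corner gap is halved by a winning pair. -/
def winGain (J : ℕ) (G : Set Pt) (c : Pt × Pt) : ℝ :=
  ∑ σ : Symmetry, ∑ j ∈ Finset.range J,
    (pairChart σ ⁻¹' winSet j (cornerGap σ (dyadic j) G)).indicator
      (fun _ => weight (dyadic j) (cornerGap σ (dyadic j) G) / 2) c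

/-- The candidate pairs whose first member is accepted by the group. -/
def acceptSet (G : Set Pt) : Set (Pt × Pt) := {c | Accepts G c.1 c.2}

lemma measurableSet_acceptSet (G : Set Pt) : MeasurableSet (acceptSet G) := by
  have h : acceptSet G = ⋂ v ∈ G, {c : Pt × Pt | dist v c.1 ≤ dist v c.2} := by
    ext c
    simp [acceptSet, Accepts]
  rw [h]
  exact (isClosed_biInter fun v _ => isClosed_le (by fun_prop) (by fun_prop)).measurableSet

/-- The number of candidates of a pair that are acceptable to the group: a bound for the increase
of the group size. -/
def acceptCount (G : Set Pt) : Pt × Pt → ℝ :=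
  (acceptSet G).indicator 1 + (Prod.swap ⁻¹' acceptSet G).indicator 1

lemma ncard_step_le (G : Set Pt) (c : Pt × Pt) :
    ((step G c).ncard : ℝ) ≤ G.ncard + acceptCount G c := by
  have insert_le (w : Pt) : ((insert w G).ncard : ℝ) ≤ G.ncard + 1 := by
    exact_mod_cast ncard_insert_le w G
  by_cases h₁ : Accepts G c.1 c.2 <;> by_cases h₂ : Accepts G c.2 c.1 <;>
    simp only [step, acceptCount, acceptSet, Pi.add_apply, indicator, mem_preimage, mem_ofPred_eq,
      Prod.fst_swap, Prod.snd_swap, h₁, h₂, if_true, if_false, Pi.one_apply] <;>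
    linarith [insert_le c.1, insert_le c.2]

section Potential

variable {G : Set Pt} (J : ℕ)

lemma weight_cornerGap_nonneg (hG : G ⊆ unitSquare) (σ : Symmetry) (j : ℕ) :
    0 ≤ weight (dyadic j) (cornerGap σ (dyadic j) G) :=
  weight_nonneg (dyadic_pos j).le (cornerGap_nonneg (dyadic_pos j).le hG)

lemma potential_nonneg (hG : G ⊆ unitSquare) : 0 ≤ potential J G :=
  Finset.sum_nonneg fun σ _ => Finset.sum_nonneg fun j _ => weight_cornerGap_nonneg hG σ j

lemma potential_le (hG : IsAdmissible G) : potential J G ≤ 128 := by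
  have term (σ : Symmetry) (j : ℕ) :
      weight (dyadic j) (cornerGap σ (dyadic j) G) ≤ 8 * dyadic j :=
    weight_le (dyadic_pos j).le (cornerGap_nonneg (dyadic_pos j).le hG.subset)
      (cornerGap_le_two (dyadic_le_one j) hG)
  calc potential J G ≤ ∑ _σ : Symmetry, ∑ j ∈ Finset.range J, 8 * dyadic j :=
        Finset.sum_le_sum fun σ _ => Finset.sum_le_sum fun j _ => term σ j
    _ = 64 * ∑ j ∈ Finset.range J, dyadic j := by
        rw [Finset.sum_const, ← Finset.mul_sum, Finset.card_univ]
        norm_num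
        ring
    _ ≤ 64 * 2 := by gcongr; exact sum_geometric_two_le J
    _ = 128 := by norm_num

lemma potential_step_le (hG : IsAdmissible G) {c : Pt × Pt}
    (hc : c.1 ∈ unitSquare ∧ c.2 ∈ unitSquare) :
    potential J (step G c) ≤ potential J G - winGain J G c := by
  unfold potential winGain
  simp only [← Finset.sum_sub_distrib]
  refine Finset.sum_le_sum fun σ _ => Finset.sum_le_sum fun j _ => ?_
  have hG' := hG.step hc
  have gap_nonneg := cornerGap_nonneg (σ := σ) (dyadic_pos j).le hG.subset
  have gap_nonneg' := cornerGap_nonneg (σ := σ) (dyadic_pos j).le hG'.subset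
  by_cases hwin : c ∈ pairChart σ ⁻¹' winSet j (cornerGap σ (dyadic j) G)
  · rw [indicator_of_mem hwin]
    have halved := weight_le_weight (dyadic_pos j).le le_rfl gap_nonneg'
      (cornerGap_step_le_half hG hwin)
    linarith [weight_half_le (ε := dyadic j) gap_nonneg, weight_cornerGap_nonneg hG.subset σ j]
  · rw [indicator_of_notMem hwin, sub_zero]
    exact weight_le_weight (dyadic_pos j).le le_rfl gap_nonneg'
      (cornerGap_anti hG.nonempty hG'.finite (subset_step G c))

/-! ### Acceptance probability and expected gain -/

variable (G) in
lemma measurableSet_acceptCover (σ : Symmetry) : MeasurableSet (acceptCover J σ G) :=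
  (measurableSet_pairBox _ _ _).union
    (Finset.measurableSet_biUnion _ fun _ _ => measurableSet_pairBox _ _ _)

lemma volume_acceptCover_le (hG : G ⊆ unitSquare) (σ : Symmetry) :
    volume (acceptCover J σ G) ≤ ENNReal.ofReal (dyadic J +
      32 * ∑ j ∈ Finset.range J, weight (dyadic j) (cornerGap σ (dyadic j) G)) := by
  have hw (j : ℕ) : 0 ≤ 32 * weight (dyadic j) (cornerGap σ (dyadic j) G) :=
    mul_nonneg (by norm_num) (weight_cornerGap_nonneg hG σ j)
  rw [Finset.mul_sum, ENNReal.ofReal_add (dyadic_pos J).le (Finset.sum_nonneg fun j _ => hw j),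
    ENNReal.ofReal_sum_of_nonneg fun j _ => hw j, ← volume_flatRegion (dyadic_pos J).le]
  refine (measure_union_le _ _).trans (add_le_add le_rfl ?_)
  refine (measure_biUnion_finset_le _ _).trans (Finset.sum_le_sum fun j _ => ?_)
  exact volume_acceptRegion_le (dyadic_pos j) (cornerGap_nonneg (dyadic_pos j).le hG)

lemma pairLaw_real_acceptSet_le (hG : IsAdmissible G) :
    pairLaw.real (acceptSet G) ≤ 8 * dyadic J + 32 * potential J G := by
  have hw (σ : Symmetry) : 0 ≤ dyadic J +
      32 * ∑ j ∈ Finset.range J, weight (dyadic j) (cornerGap σ (dyadic j) G) :=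
    add_nonneg (dyadic_pos J).le <| mul_nonneg (by norm_num) <|
      Finset.sum_nonneg fun j _ => weight_cornerGap_nonneg hG.subset σ j
  have cover : acceptSet G ≤ᵐ[pairLaw] ⋃ σ, pairChart σ ⁻¹' acceptCover J σ G := by
    filter_upwards [ae_mem_pairLaw] with c hc hacc
    exact mem_iUnion.2 (exists_pairChart_mem_acceptCover hG hc hacc J)
  refine ENNReal.toReal_le_of_le_ofReal ?_ ?_
  · exact add_nonneg (mul_nonneg (by norm_num) (dyadic_pos J).le)
      (mul_nonneg (by norm_num) (potential_nonneg J hG.subset))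
  calc pairLaw (acceptSet G) ≤ ∑ σ, pairLaw (pairChart σ ⁻¹' acceptCover J σ G) :=
        (measure_mono_ae cover).trans (measure_iUnion_fintype_le _ _)
    _ ≤ ∑ σ : Symmetry, ENNReal.ofReal (dyadic J +
          32 * ∑ j ∈ Finset.range J, weight (dyadic j) (cornerGap σ (dyadic j) G)) :=
        Finset.sum_le_sum fun σ _ =>
          (pairLaw_preimage_pairChart_le σ (measurableSet_acceptCover G J σ)).trans
            (volume_acceptCover_le J hG.subset σ)
    _ = ENNReal.ofReal (8 * dyadic J + 32 * potential J G) := by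
        rw [← ENNReal.ofReal_sum_of_nonneg fun σ _ => hw σ, Finset.sum_add_distrib,
          ← Finset.mul_sum, Finset.sum_const, Finset.card_univ, potential]
        norm_num

lemma integrable_indicator_acceptSet (G : Set Pt) :
    Integrable ((acceptSet G).indicator (1 : Pt × Pt → ℝ)) pairLaw :=
  (integrable_const 1).indicator (measurableSet_acceptSet G)

lemma integrable_indicator_swap_acceptSet (G : Set Pt) :
    Integrable ((Prod.swap ⁻¹' acceptSet G).indicator (1 : Pt × Pt → ℝ)) pairLaw :=
  (integrable_const 1).indicator (measurable_swap (measurableSet_acceptSet G))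

lemma integrable_acceptCount (G : Set Pt) : Integrable (acceptCount G) pairLaw :=
  (integrable_indicator_acceptSet G).add (integrable_indicator_swap_acceptSet G)

lemma integral_acceptCount (G : Set Pt) :
    ∫ c, acceptCount G c ∂pairLaw = 2 * pairLaw.real (acceptSet G) := by
  have hA := measurableSet_acceptSet G
  have hswap : pairLaw.real (Prod.swap ⁻¹' acceptSet G) = pairLaw.real (acceptSet G) :=
    Measure.measurePreserving_swap.measureReal_preimage hA.nullMeasurableSet
  unfold acceptCount
  rw [integral_add' (integrable_indicator_acceptSet G) (integrable_indicator_swap_acceptSet G),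
    integral_indicator_one hA, integral_indicator_one (measurable_swap hA), hswap, two_mul]

variable (G) in
lemma integrable_indicator_winSet (σ : Symmetry) (j : ℕ) (x : ℝ) :
    Integrable ((pairChart σ ⁻¹' winSet j (cornerGap σ (dyadic j) G)).indicator fun _ => x)
      pairLaw :=
  (integrable_const x).indicator
    ((measurePreserving_pairChart σ).measurable (measurableSet_winSet _ _))

variable (G) in
lemma integrable_winGain : Integrable (winGain J G) pairLaw :=
  integrable_finsetSum _ fun σ _ => integrable_finsetSum _ fun j _ =>
    integrable_indicator_winSet G σ j _

lemma le_integral_winGain (hG : IsAdmissible G) :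
    ∑ σ : Symmetry, ∑ j ∈ Finset.range J,
        (j + 1) * weight (dyadic j) (cornerGap σ (dyadic j) G) ^ 2 / (4 * 32 ^ 4) ≤
      ∫ c, winGain J G c ∂pairLaw := by
  unfold winGain
  rw [integral_finsetSum _ fun σ _ => integrable_finsetSum _ fun j _ =>
    integrable_indicator_winSet G σ j _]
  refine Finset.sum_le_sum fun σ _ => ?_
  rw [integral_finsetSum _ fun j _ => integrable_indicator_winSet G σ j _]
  refine Finset.sum_le_sum fun j _ => ?_
  have prob := le_pairLaw_real_winSet σ j (cornerGap_nonneg (σ := σ) (dyadic_pos j).le hG.subset)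
    (cornerGap_le_two (dyadic_le_one j) hG)
  rw [integral_indicator_const _
    ((measurePreserving_pairChart σ).measurable (measurableSet_winSet _ _)), smul_eq_mul]
  calc (j + 1) * weight (dyadic j) (cornerGap σ (dyadic j) G) ^ 2 / (4 * 32 ^ 4)
    _ = (j + 1) * weight (dyadic j) (cornerGap σ (dyadic j) G) / (2 * 32 ^ 4) *
          (weight (dyadic j) (cornerGap σ (dyadic j) G) / 2) := by ring
    _ ≤ _ := mul_le_mul_of_nonneg_right prob
        (div_nonneg (weight_cornerGap_nonneg hG.subset σ j) zero_le_two)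

lemma cast_harmonic_nonneg (n : ℕ) : (0 : ℝ) ≤ harmonic n := by
  unfold harmonic; positivity

-- Cauchy–Schwarz with weights `j + 1`; they come from the `j + 1` slopes `2⁻ⁱ`, `i ≤ j`, at which a
-- pair can halve the corner gap at slope `2⁻ʲ`.
lemma sq_potential_le (hG : IsAdmissible G) :
    potential J G ^ 2 ≤ 2 ^ 25 * harmonic J * ∫ c, winGain J G c ∂pairLaw := by
  have harmonic_sum : ∑ _σ : Symmetry, ∑ j ∈ Finset.range J, ((j : ℝ) + 1)⁻¹ = 8 * harmonic J := by
    rw [Finset.sum_const, Finset.card_univ, harmonic]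
    push_cast
    norm_num
  calc potential J G ^ 2
    _ ≤ (∑ _σ : Symmetry, ∑ j ∈ Finset.range J, ((j : ℝ) + 1)⁻¹) *
          ∑ σ : Symmetry, ∑ j ∈ Finset.range J,
            (j + 1) * weight (dyadic j) (cornerGap σ (dyadic j) G) ^ 2 := by
        unfold potential
        simp only [← Finset.sum_product']
        refine Finset.sum_sq_le_sum_mul_sum_of_sq_le_mul _ ?_ ?_ ?_
        · intro i _; positivity
        · intro i _; positivity
        · intro i _
          rw [inv_mul_cancel_left₀ (by positivity)]
    _ = 2 ^ 25 * harmonic J * ∑ σ : Symmetry, ∑ j ∈ Finset.range J,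
          (j + 1) * weight (dyadic j) (cornerGap σ (dyadic j) G) ^ 2 / (4 * 32 ^ 4) := by
        simp only [harmonic_sum, ← Finset.sum_div]
        ring
    _ ≤ _ := by
        gcongr
        · exact mul_nonneg (by norm_num) (cast_harmonic_nonneg J)
        · exact le_integral_winGain J hG

end Potential

/-! ### The Lyapunov function -/

/-- The group size corrected by a logarithm of the potential, whose decrease in a round makes up
for the expected growth of the group. The coefficient is `2 ^ 31 = 64 * 2 ^ 25`, with `64` twice the
factor of `pairLaw_real_acceptSet_le` and `2 ^ 25` the factor of `sq_potential_le`. -/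
def lyapunov (J : ℕ) (T : ℝ) (G : Set Pt) : ℝ :=
  G.ncard + 2 ^ 31 * harmonic J * Real.log (1 + T * potential J G)

/-- An integrable upper bound for `lyapunov J T (step G c)`, obtained by linearizing the
logarithm. -/
def lyapunovBound (J : ℕ) (T : ℝ) (G : Set Pt) (c : Pt × Pt) : ℝ :=
  lyapunov J T G + acceptCount G c -
    2 ^ 31 * harmonic J * (T / (1 + T * potential J G)) * winGain J G c

section Lyapunov

variable {J : ℕ} {T : ℝ} {G : Set Pt}

lemma ncard_le_lyapunov (hT : 0 < T) (hG : G ⊆ unitSquare) : (G.ncard : ℝ) ≤ lyapunov J T G := by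
  have hlog : 0 ≤ Real.log (1 + T * potential J G) :=
    Real.log_nonneg (le_add_of_nonneg_right (mul_nonneg hT.le (potential_nonneg J hG)))
  exact le_add_of_nonneg_right
    (mul_nonneg (mul_nonneg (by norm_num) (cast_harmonic_nonneg J)) hlog)

lemma lyapunov_step_le (hT : 0 < T) (hG : IsAdmissible G) {c : Pt × Pt}
    (hc : c.1 ∈ unitSquare ∧ c.2 ∈ unitSquare) :
    lyapunov J T (step G c) ≤ lyapunovBound J T G c := by
  have hpos : 0 < 1 + T * potential J G := by
    have := potential_nonneg J hG.subset; positivity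
  have hpos' : 0 < 1 + T * potential J (step G c) := by
    have := potential_nonneg J (hG.step hc).subset; positivity
  have hlog : Real.log (1 + T * potential J (step G c)) ≤
      Real.log (1 + T * potential J G) - T / (1 + T * potential J G) * winGain J G c := by
    refine (log_le_log_sub_div hpos hpos').trans (sub_le_sub_left ?_ _)
    rw [div_mul_eq_mul_div]
    gcongr
    nlinarith [potential_step_le J hG hc]
  have hH : (0 : ℝ) ≤ 2 ^ 31 * harmonic J := mul_nonneg (by norm_num) (cast_harmonic_nonneg J)
  have := mul_le_mul_of_nonneg_left hlog hH
  unfold lyapunovBound lyapunov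
  linarith [ncard_step_le G c]

variable (J T G) in
lemma integrable_lyapunovBound : Integrable (lyapunovBound J T G) pairLaw :=
  ((integrable_const _).add (integrable_acceptCount G)).sub ((integrable_winGain G J).const_mul _)

variable (J T G) in
lemma integral_lyapunovBound : ∫ c, lyapunovBound J T G c ∂pairLaw =
    lyapunov J T G + 2 * pairLaw.real (acceptSet G) -
      2 ^ 31 * harmonic J * (T / (1 + T * potential J G)) * ∫ c, winGain J G c ∂pairLaw := by
  have hcount := integrable_acceptCount G
  unfold lyapunovBound
  rw [integral_sub (by fun_prop) ((integrable_winGain G J).const_mul _),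
    integral_add (integrable_const _) hcount, integral_const_mul, integral_acceptCount,
    integral_const, probReal_univ, one_smul]

lemma integral_lyapunovBound_le (hT : 0 < T) (hJ : dyadic J ≤ 1 / T) (hG : IsAdmissible G) :
    ∫ c, lyapunovBound J T G c ∂pairLaw ≤ lyapunov J T G + 80 / T := by
  have hM := potential_nonneg J hG.subset
  have growth : pairLaw.real (acceptSet G) ≤ 8 * (1 / T) + 32 * potential J G :=
    (pairLaw_real_acceptSet_le J hG).trans (by gcongr)
  have decrease : 64 * potential J G - 64 / T ≤
      2 ^ 31 * harmonic J * (T / (1 + T * potential J G)) * ∫ c, winGain J G c ∂pairLaw := by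
    calc 64 * potential J G - 64 / T
      _ ≤ 64 * (T / (1 + T * potential J G)) * potential J G ^ 2 := by
          rw [sub_le_iff_le_add, mul_div_assoc', div_mul_eq_mul_div,
            div_add_div _ _ (by positivity) hT.ne', le_div_iff₀ (by positivity)]
          nlinarith
      _ ≤ 64 * (T / (1 + T * potential J G)) *
            (2 ^ 25 * harmonic J * ∫ c, winGain J G c ∂pairLaw) := by
          gcongr
          exact sq_potential_le J hG
      _ = _ := by ring
  calc ∫ c, lyapunovBound J T G c ∂pairLaw
    _ ≤ lyapunov J T G + 2 * (8 * (1 / T) + 32 * potential J G) -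
          (64 * potential J G - 64 / T) := by
        rw [integral_lyapunovBound]
        gcongr
    _ = lyapunov J T G + 80 / T := by ring

lemma lintegral_lyapunov_step_le (hT : 0 < T) (hJ : dyadic J ≤ 1 / T) (hG : IsAdmissible G) :
    ∫⁻ c, ENNReal.ofReal (lyapunov J T (step G c)) ∂pairLaw ≤
      ENNReal.ofReal (lyapunov J T G) + ENNReal.ofReal (80 / T) := by
  have bound_nonneg : 0 ≤ᵐ[pairLaw] lyapunovBound J T G := by
    filter_upwards [ae_mem_pairLaw] with c hc
    exact (Nat.cast_nonneg _).trans
      ((ncard_le_lyapunov hT (hG.step hc).subset).trans (lyapunov_step_le hT hG hc))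
  calc ∫⁻ c, ENNReal.ofReal (lyapunov J T (step G c)) ∂pairLaw
    _ ≤ ∫⁻ c, ENNReal.ofReal (lyapunovBound J T G c) ∂pairLaw :=
        lintegral_mono_ae <| ae_mem_pairLaw.mono fun c hc =>
          ENNReal.ofReal_le_ofReal (lyapunov_step_le hT hG hc)
    _ = ENNReal.ofReal (∫ c, lyapunovBound J T G c ∂pairLaw) :=
        (ofReal_integral_eq_lintegral_ofReal (integrable_lyapunovBound J T G) bound_nonneg).symm
    _ ≤ ENNReal.ofReal (lyapunov J T G + 80 / T) :=
        ENNReal.ofReal_le_ofReal (integral_lyapunovBound_le hT hJ hG)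
    _ ≤ _ := ENNReal.ofReal_add_le

end Lyapunov

/-! ### The bound in terms of `T` -/

lemma dyadic_natLog_succ_le {T : ℕ} (hT : 0 < T) : dyadic (Nat.log 2 T + 1) ≤ 1 / (T : ℝ) := by
  rw [dyadic, one_div_pow]
  gcongr
  exact_mod_cast (Nat.lt_pow_succ_log_self one_lt_two T).le

lemma one_lt_log_three : 1 < Real.log 3 := by
  rw [Real.lt_log_iff_exp_lt (by norm_num)]
  exact Real.exp_one_lt_three

lemma log_log_three_pos : 0 < Real.log (Real.log 3) := Real.log_pos one_lt_log_three

section Logarithms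

variable {T : ℕ}

lemma log_log_three_le_log_log (hT : 3 ≤ T) :
    Real.log (Real.log 3) ≤ Real.log (Real.log T) := by
  have := one_lt_log_three
  gcongr
  exact_mod_cast hT

lemma one_lt_log (hT : 3 ≤ T) : 1 < Real.log T :=
  one_lt_log_three.trans_le (Real.log_le_log (by norm_num) (by exact_mod_cast hT))

lemma natLog_succ_le (hT : 3 ≤ T) : ((Nat.log 2 T + 1 : ℕ) : ℝ) ≤ 3 * Real.log T := by
  have hlog : (Nat.log 2 T : ℝ) * Real.log 2 ≤ Real.log T := by
    have := Real.natLog_le_logb T 2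
    rwa [← Real.log_div_log, Nat.cast_ofNat, le_div_iff₀ (Real.log_pos one_lt_two)] at this
  push_cast
  nlinarith [one_lt_log hT, Real.log_two_gt_d9]

lemma harmonic_natLog_succ_le (hT : 3 ≤ T) :
    (harmonic (Nat.log 2 T + 1) : ℝ) ≤
      (1 + 3 / Real.log (Real.log 3)) * Real.log (Real.log T) := by
  have hlog := one_lt_log hT
  have log_three_le : Real.log 3 ≤ 2 := by
    linarith [Real.log_le_sub_one_of_pos (x := 3) (by norm_num)]
  calc (harmonic (Nat.log 2 T + 1) : ℝ)
    _ ≤ 1 + Real.log (Nat.log 2 T + 1 : ℕ) := harmonic_le_one_add_log _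
    _ ≤ 1 + Real.log (3 * Real.log T) := by gcongr; exact natLog_succ_le hT
    _ = 1 + (Real.log 3 + Real.log (Real.log T)) := by
        rw [Real.log_mul (by norm_num) (by positivity)]
    _ ≤ Real.log (Real.log T) + 3 * 1 := by linarith
    _ ≤ Real.log (Real.log T) + 3 * (Real.log (Real.log T) / Real.log (Real.log 3)) := by
        gcongr
        exact (one_le_div log_log_three_pos).2 (log_log_three_le_log_log hT)
    _ = (1 + 3 / Real.log (Real.log 3)) * Real.log (Real.log T) := by ring

lemma log_one_add_mul_le (hT : 3 ≤ T) :
    Real.log (1 + T * 128) ≤ (1 + Real.log 129) * Real.log T := by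
  have hT1 : (1 : ℝ) ≤ T := by exact_mod_cast (by omega : 1 ≤ T)
  calc Real.log (1 + T * 128) ≤ Real.log (129 * T) := by gcongr; linarith
    _ = Real.log 129 * 1 + Real.log T := by rw [Real.log_mul (by norm_num) (by positivity), mul_one]
    _ ≤ Real.log 129 * Real.log T + Real.log T := by gcongr; exact (one_lt_log hT).le
    _ = (1 + Real.log 129) * Real.log T := by ring

/-- The constant of the theorem, for a group with `k` initial members. -/
def growthConstant (k : ℕ) : ℝ :=
  (k + 80) / Real.log (Real.log 3) +
    2 ^ 31 * (1 + 3 / Real.log (Real.log 3)) * (1 + Real.log 129)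

lemma growthConstant_pos (k : ℕ) : 0 < growthConstant k := by
  have := log_log_three_pos
  unfold growthConstant
  positivity

lemma add_harmonic_mul_log_le (k : ℕ) (hT : 3 ≤ T) :
    k + 2 ^ 31 * harmonic (Nat.log 2 T + 1) * Real.log (1 + T * 128) + 80 ≤
      growthConstant k * Real.log T * Real.log (Real.log T) := by
  have hlog := one_lt_log hT
  have hpos := log_log_three_pos
  have hmono := log_log_three_le_log_log hT
  have hloglog := hpos.trans_le hmono
  have initial : k + 80 ≤
      (k + 80) / Real.log (Real.log 3) * Real.log T * Real.log (Real.log T) := by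
    calc (k + 80 : ℝ) = (k + 80) / Real.log (Real.log 3) * 1 * Real.log (Real.log 3) := by
          field_simp
      _ ≤ _ := by gcongr
  have main : 2 ^ 31 * harmonic (Nat.log 2 T + 1) * Real.log (1 + T * 128) ≤
      2 ^ 31 * ((1 + 3 / Real.log (Real.log 3)) * Real.log (Real.log T)) *
        ((1 + Real.log 129) * Real.log T) := by
    gcongr
    · exact Real.log_nonneg (by linarith [(T.cast_nonneg : (0 : ℝ) ≤ T)])
    · exact harmonic_natLog_succ_le hT
    · exact log_one_add_mul_le hT
  unfold growthConstant
  linarith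

end Logarithms

/-! ### Conclusion -/

lemma isAdmissible_range {k : ℕ} (hk : 1 ≤ k) {init : Fin k → Pt}
    (hinit : ∀ i, init i ∈ unitSquare) : IsAdmissible (range init) where
  finite := finite_range init
  nonempty := ⟨init ⟨0, hk⟩, mem_range_self _⟩
  subset := range_subset_iff.2 hinit

lemma ncard_range_le {k : ℕ} (init : Fin k → Pt) : (range init).ncard ≤ k := by
  simpa [← image_univ, ncard_univ] using ncard_image_le (f := init) finite_univ

lemma grp_eq_foldl {k : ℕ} (init : Fin k → Pt) (c : ℕ → Pt × Pt) (n : ℕ) :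
    grp init c n = Fin.foldl n (fun G i => step G (c i)) (range init) := by
  induction n with
  | zero => simp [grp]
  | succ n ih => rw [Fin.foldl_succ_last, grp, ih]; rfl

lemma grp_extSeq_eq_foldl {k T : ℕ} (init : Fin k → Pt) (c : Fin T → Pt × Pt) :
    grp init (extSeq c) T = Fin.foldl T (fun G i => step G (c i)) (range init) := by
  simp [grp_eq_foldl, extSeq]

lemma ae_forall_mem_unitSquare (k : ℕ) :
    ∀ᵐ init ∂(Measure.pi fun _ : Fin k => squareLaw), ∀ i, init i ∈ unitSquare :=
  ae_all_iff.2 fun i => (Measure.quasiMeasurePreserving_eval (fun _ => squareLaw) i).ae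
    (ae_restrict_mem measurableSet_unitSquare)

lemma lyapunov_range_le {k : ℕ} (J : ℕ) {T : ℝ} (hT : 0 < T) {init : Fin k → Pt}
    (hinit : IsAdmissible (range init)) :
    lyapunov J T (range init) ≤ k + 2 ^ 31 * harmonic J * Real.log (1 + T * 128) := by
  have hM := potential_nonneg J hinit.subset
  have hM' := potential_le J hinit
  have hH := cast_harmonic_nonneg J
  unfold lyapunov
  gcongr
  exact ncard_range_le init

lemma lintegral_ncard_grp_le {k : ℕ} {T : ℕ} (hT : 3 ≤ T) {init : Fin k → Pt}
    (hinit : IsAdmissible (range init)) :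
    ∫⁻ c : Fin T → Pt × Pt, ((grp init (extSeq c) T).ncard : ℝ≥0∞)
        ∂(Measure.pi fun _ => pairLaw) ≤
      ENNReal.ofReal (growthConstant k * Real.log T * Real.log (Real.log T)) := by
  have hTpos : (0 : ℝ) < T := by exact_mod_cast (by omega : 0 < T)
  simp only [grp_extSeq_eq_foldl]
  calc ∫⁻ c : Fin T → Pt × Pt,
        ((Fin.foldl T (fun G i => step G (c i)) (range init)).ncard : ℝ≥0∞)
        ∂(Measure.pi fun _ => pairLaw)
    _ ≤ ENNReal.ofReal (lyapunov (Nat.log 2 T + 1) T (range init)) +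
          T * ENNReal.ofReal (80 / T) := by
        refine lintegral_foldl_le pairLaw (P := IsAdmissible) (F := fun G => (G.ncard : ℝ≥0∞))
          (V := fun G => ENNReal.ofReal (lyapunov _ T G)) ?_ ?_ ?_ T hinit
        · exact fun G hG => ae_mem_pairLaw.mono fun c hc => hG.step hc
        · intro G hG
          rw [← ENNReal.ofReal_natCast]
          exact ENNReal.ofReal_le_ofReal (ncard_le_lyapunov hTpos hG.subset)
        · exact fun G hG => lintegral_lyapunov_step_le hTpos (dyadic_natLog_succ_le (by omega)) hG
    _ = ENNReal.ofReal (lyapunov (Nat.log 2 T + 1) T (range init) + 80) := by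
        rw [ENNReal.ofReal_add ((Nat.cast_nonneg _).trans (ncard_le_lyapunov hTpos hinit.subset))
          (by norm_num), ← ENNReal.ofReal_natCast T, ← ENNReal.ofReal_mul hTpos.le,
          mul_div_cancel₀ _ hTpos.ne']
    _ ≤ ENNReal.ofReal (growthConstant k * Real.log T * Real.log (Real.log T)) := by
        refine ENNReal.ofReal_le_ofReal (le_trans ?_ (add_harmonic_mul_log_le k hT))
        gcongr
        exact lyapunov_range_le _ hTpos hinit

end ConsensusVoting

open ConsensusVoting

/-- For the consensus-voting group process on the unit square
`ℍ = [0,1]²` (with `k ≥ 1` uniform initial members and two i.i.d. uniform candidates per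
round), there is a constant `C > 0` such that for every `T ≥ 3` the expected group size
after `T` rounds satisfies `E[|G^T|] ≤ C · ln T · ln ln T`. -/
theorem expected_group_size_square_upper (k : ℕ) (hk : 1 ≤ k) :
    ∃ C : ℝ, 0 < C ∧ ∀ T : ℕ, 3 ≤ T →
      ∫⁻ ω, ((grp ω.1 (extSeq ω.2) T).ncard : ℝ≥0∞)
          ∂(procMeasure (volume.restrict unitSquare) k T)
        ≤ ENNReal.ofReal (C * Real.log T * Real.log (Real.log T)) := by
  refine ⟨growthConstant k, growthConstant_pos k, fun T hT => ?_⟩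
  refine (lintegral_prod_le _).trans ?_
  calc ∫⁻ init, ∫⁻ c : Fin T → Pt × Pt, ((grp init (extSeq c) T).ncard : ℝ≥0∞)
        ∂(Measure.pi fun _ => pairLaw) ∂(Measure.pi fun _ : Fin k => squareLaw)
    _ ≤ ∫⁻ _init : Fin k → Pt,
          ENNReal.ofReal (growthConstant k * Real.log T * Real.log (Real.log T))
          ∂(Measure.pi fun _ => squareLaw) :=
        lintegral_mono_ae <| (ae_forall_mem_unitSquare k).mono fun init hinit =>
          lintegral_ncard_grp_le hT (isAdmissible_range hk hinit)
    _ = ENNReal.ofReal (growthConstant k * Real.log T * Real.log (Real.log T)) := by simp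

end
end
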